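/- arXiv:1412.5286 — 2 statements merged into one kernel-verified Lean document; each statement's English description precedes it below -/
import Mathlib

section
/- (Theorem 2.) Let k ≥ 1, let J denote the 2k×2k block-diagonal complex matrix with k copies of diag(i, −i), and fix s ∈ ℂ. Suppose M, N₊, N₋ and M', N₊', N₋' are 2k×2k complex matrices (the unprimed ones are the values of the transfer matrices at s, the primed ones their values at −s̄) satisfying the symmetries J⁻¹M'†J = −M, J⁻¹N₊'†J = N₋, and J⁻¹N₋'†J = N₊. Assume moreover the commutation conditions M·N₊ = N₊·M, M·N₋ = N₋·M, N₊·N₋ = N₋·N₊, and that I + N₊·M and I − N₋·M are invertible. Define G = (I − N₋·M)(I + N₊·M)⁻¹ and G' = (I − N₋'·M')(I + N₊'·M')⁻¹ (the latter is well defined, i.e., I + N₊'·M' and I − N₋'·M' are invertible). Then (J⁻¹G'†J)·G = I, i.e., G~(s)·G(s) = I where X~(s) := J⁻¹X(−s̄)†J. -/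
open Matrix Complex

/-- `Jmat k` is the `2k×2k` block-diagonal complex matrix with `k` copies of `diag(i, −i)`
on the diagonal. -/
noncomputable def Jmat (k : ℕ) : Matrix (Fin (2 * k)) (Fin (2 * k)) ℂ :=
  Matrix.diagonal fun i => if i.val % 2 = 0 then Complex.I else -Complex.I

/-- Theorem 2: with `X~(s) := J⁻¹ X(−s̄)† J`, the non-Markovian transfer function
`G(s) = (I − N₋(s)M(s))(I + N₊(s)M(s))⁻¹` satisfies `G~(s)·G(s) = I` under the stated
symmetry and commutation conditions.  Here `M, N₊, N₋` are the values at `s` and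
`M', N₊', N₋'` the values at `−s̄`. -/
theorem transfer_function_sim_unitary (k : ℕ) (hk : 1 ≤ k) (s : ℂ)
    (M Np Nm M' Np' Nm' : Matrix (Fin (2 * k)) (Fin (2 * k)) ℂ)
    (hM : (Jmat k)⁻¹ * M'ᴴ * Jmat k = -M)
    (hNp : (Jmat k)⁻¹ * Np'ᴴ * Jmat k = Nm)
    (hNm : (Jmat k)⁻¹ * Nm'ᴴ * Jmat k = Np)
    (hc₁ : M * Np = Np * M) (hc₂ : M * Nm = Nm * M) (hc₃ : Np * Nm = Nm * Np)
    (h₁ : IsUnit (1 + Np * M)) (h₂ : IsUnit (1 - Nm * M)) :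
    IsUnit (1 + Np' * M') ∧ IsUnit (1 - Nm' * M') ∧
      ((Jmat k)⁻¹ * ((1 - Nm' * M') * (1 + Np' * M')⁻¹)ᴴ * Jmat k) *
        ((1 - Nm * M) * (1 + Np * M)⁻¹) = 1 := by
  have hJ : IsUnit (Jmat k) := by
    rw [Matrix.isUnit_iff_isUnit_det, isUnit_iff_ne_zero, Jmat, Matrix.det_diagonal]
    refine Finset.prod_ne_zero_iff.mpr fun i _ => ?_
    split_ifs <;> simp
  have hJd : IsUnit (Jmat k).det := (Matrix.isUnit_iff_isUnit_det _).mp hJ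
  have hJi : IsUnit (Jmat k)⁻¹ := by
    rw [Matrix.isUnit_nonsing_inv_iff]; exact hJ
  generalize Jmat k = J at *
  have j1 : J * J⁻¹ = 1 := Matrix.mul_nonsing_inv _ hJd
  have j2 : J⁻¹ * J = 1 := Matrix.nonsing_inv_mul _ hJd
  have conj : ∀ X Y, J⁻¹ * X * J = Y → X = J * Y * J⁻¹ := by
    intro X Y h
    rw [← h]
    calc X = (J * J⁻¹) * X * (J * J⁻¹) := by rw [j1]; simp
      _ = _ := by simp only [mul_assoc]
  have mulc : ∀ X Y, (J * X * J⁻¹) * (J * Y * J⁻¹) = J * (X * Y) * J⁻¹ := by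
    intro X Y
    calc _ = J * X * (J⁻¹ * J) * Y * J⁻¹ := by simp only [mul_assoc]
      _ = _ := by rw [j2]; simp only [mul_assoc, one_mul]
  have hP : (1 + Np' * M')ᴴ = J * (1 - Nm * M) * J⁻¹ := by
    rw [conjTranspose_add, conjTranspose_mul, conjTranspose_one, conj _ _ hM, conj _ _ hNp,
      mulc, neg_mul, hc₂, mul_sub, sub_mul, mul_one, j1, mul_neg, neg_mul, sub_eq_add_neg]
  have hQ : (1 - Nm' * M')ᴴ = J * (1 + Np * M) * J⁻¹ := by
    rw [conjTranspose_sub, conjTranspose_mul, conjTranspose_one, conj _ _ hM, conj _ _ hNm,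
      mulc, neg_mul, hc₁, mul_add, add_mul, mul_one, j1, mul_neg, neg_mul, sub_neg_eq_add]
  have hcomm : (1 + Np * M) * (1 - Nm * M) = (1 - Nm * M) * (1 + Np * M) := by
    have e : Commute (Np * M) (Nm * M) :=
      (Commute.mul_right hc₃ hc₁.symm).mul_left (Commute.mul_right hc₂ (Commute.refl M))
    exact ((Commute.one_left _).add_left ((Commute.one_right _).sub_right e)).eq
  generalize 1 + Np * M = A at *
  generalize 1 - Nm * M = B at *
  have hA := (Matrix.isUnit_iff_isUnit_det _).mp h₁
  have hB := (Matrix.isUnit_iff_isUnit_det _).mp h₂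
  refine ⟨?_, ?_, ?_⟩
  · rw [← isUnit_star, star_eq_conjTranspose, hP]
    exact (hJ.mul h₂).mul hJi
  · rw [← isUnit_star, star_eq_conjTranspose, hQ]
    exact (hJ.mul h₁).mul hJi
  · rw [conjTranspose_mul, conjTranspose_nonsing_inv, hP, hQ]
    have hi : (J * B * J⁻¹)⁻¹ = J * B⁻¹ * J⁻¹ := by
      apply Matrix.inv_eq_right_inv
      rw [mulc, Matrix.mul_nonsing_inv _ hB, mul_one, j1]
    rw [hi, mulc]
    calc _ = (J⁻¹ * J) * B⁻¹ * A * (J⁻¹ * J) * B * A⁻¹ := by simp only [mul_assoc]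
      _ = B⁻¹ * (A * B) * A⁻¹ := by rw [j2]; simp only [mul_assoc, one_mul]
      _ = (B⁻¹ * B) * (A * A⁻¹) := by rw [hcomm]; simp only [mul_assoc]
      _ = 1 := by rw [Matrix.nonsing_inv_mul _ hB, Matrix.mul_nonsing_inv _ hA, one_mul]
end

section
/- (Theorem 2, ♭-unitarity on the imaginary axis.) Let k ≥ 1, let J denote the 2k×2k block-diagonal complex matrix with k copies of diag(i, −i), and for a 2k×2k complex matrix X write X♭ = J⁻¹X†J. Suppose M, N₊, N₋ are 2k×2k complex matrices with M♭ = −M, N₊♭ = N₋, satisfying the commutation conditions M·N₊ = N₊·M, M·N₋ = N₋·M, N₊·N₋ = N₋·N₊, and such that I + N₊·M and I − N₋·M are invertible. Then G = (I − N₋·M)(I + N₊·M)⁻¹ is ♭-unitary: G♭·G = I. -/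
open Matrix Complex

/-- The ♭-conjugate `X♭ = J⁻¹ X† J` of a `2k×2k` complex matrix. -/
noncomputable def flat (k : ℕ) (X : Matrix (Fin (2 * k)) (Fin (2 * k)) ℂ) :
    Matrix (Fin (2 * k)) (Fin (2 * k)) ℂ :=
  (Jmat k)⁻¹ * Xᴴ * Jmat k

theorem Jmat_sq (k : ℕ) : Jmat k * Jmat k = -1 := by
  unfold Jmat
  rw [Matrix.diagonal_mul_diagonal, ← Matrix.diagonal_one, Matrix.diagonal_neg]
  congr 1
  funext i
  split_ifs <;> simp

theorem Jmat_inv (k : ℕ) : (Jmat k)⁻¹ = -Jmat k := by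
  apply Matrix.inv_eq_right_inv
  rw [mul_neg, Jmat_sq, neg_neg]

theorem Jmat_conj (k : ℕ) : (Jmat k)ᴴ = -Jmat k := by
  unfold Jmat
  rw [Matrix.diagonal_conjTranspose, Matrix.diagonal_neg]
  congr 1
  funext i
  simp only [Pi.star_apply]
  split_ifs <;> simp

theorem flat_eq (k : ℕ) (X : Matrix (Fin (2 * k)) (Fin (2 * k)) ℂ) :
    flat k X = -(Jmat k * Xᴴ * Jmat k) := by
  rw [flat, Jmat_inv, neg_mul, neg_mul]

theorem flat_mul (k : ℕ) (X Y : Matrix (Fin (2 * k)) (Fin (2 * k)) ℂ) :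
    flat k (X * Y) = flat k Y * flat k X := by
  rw [flat_eq, flat_eq, flat_eq, Matrix.conjTranspose_mul, neg_mul_neg]
  have : Jmat k * Yᴴ * Jmat k * (Jmat k * Xᴴ * Jmat k)
      = Jmat k * Yᴴ * (Jmat k * Jmat k) * Xᴴ * Jmat k := by noncomm_ring
  rw [this, Jmat_sq]
  noncomm_ring

theorem flat_flat (k : ℕ) (X : Matrix (Fin (2 * k)) (Fin (2 * k)) ℂ) :
    flat k (flat k X) = X := by
  rw [flat_eq, flat_eq, Matrix.conjTranspose_neg, Matrix.conjTranspose_mul,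
    Matrix.conjTranspose_mul, Jmat_conj, Matrix.conjTranspose_conjTranspose]
  have : -(Jmat k * -(-Jmat k * (X * -Jmat k)) * Jmat k)
      = (Jmat k * Jmat k) * X * (Jmat k * Jmat k) := by noncomm_ring
  rw [this, Jmat_sq]
  noncomm_ring

theorem flat_add (k : ℕ) (X Y : Matrix (Fin (2 * k)) (Fin (2 * k)) ℂ) :
    flat k (X + Y) = flat k X + flat k Y := by
  simp only [flat, Matrix.conjTranspose_add, mul_add, add_mul]

theorem flat_sub (k : ℕ) (X Y : Matrix (Fin (2 * k)) (Fin (2 * k)) ℂ) :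
    flat k (X - Y) = flat k X - flat k Y := by
  simp only [flat, Matrix.conjTranspose_sub, mul_sub, sub_mul]

theorem flat_one (k : ℕ) : flat k 1 = 1 := by
  rw [flat_eq, Matrix.conjTranspose_one, mul_one, Jmat_sq, neg_neg]

/-- Theorem 2 evaluated on the imaginary axis: if `M♭ = −M`, `N₊♭ = N₋`, the matrices
`M, N₊, N₋` pairwise commute as stated, and `I + N₊M`, `I − N₋M` are invertible, then the
transfer function `G = (I − N₋M)(I + N₊M)⁻¹` is ♭-unitary: `G♭·G = I`. -/
theorem transfer_function_flat_unitary (k : ℕ) (hk : 1 ≤ k)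
    (M Np Nm : Matrix (Fin (2 * k)) (Fin (2 * k)) ℂ)
    (hM : flat k M = -M) (hNp : flat k Np = Nm)
    (hc₁ : M * Np = Np * M) (hc₂ : M * Nm = Nm * M) (hc₃ : Np * Nm = Nm * Np)
    (h₁ : IsUnit (1 + Np * M)) (h₂ : IsUnit (1 - Nm * M)) :
    flat k ((1 - Nm * M) * (1 + Np * M)⁻¹) * ((1 - Nm * M) * (1 + Np * M)⁻¹) = 1 := by
  have hA : flat k (1 + Np * M) = 1 - Nm * M := by
    rw [flat_add, flat_one, flat_mul, hM, hNp, neg_mul, hc₂, sub_eq_add_neg]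
  have hB : flat k (1 - Nm * M) = 1 + Np * M := by
    rw [← hA, flat_flat]
  have hcomm : (1 + Np * M) * (1 - Nm * M) = (1 - Nm * M) * (1 + Np * M) := by
    have e : Np * M * (Nm * M) = Nm * M * (Np * M) := by
      have a : Commute M Np := hc₁
      have b : Commute M Nm := hc₂
      have c : Commute Np Nm := hc₃
      exact (Commute.mul_left (c.mul_right a.symm) (b.mul_right (Commute.refl M))).eq
    simp only [add_mul, sub_mul, mul_add, mul_sub, one_mul, mul_one, e]
    abel
  have hdet := (Matrix.isUnit_iff_isUnit_det _).mp h₁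
  have hF : flat k (1 + Np * M)⁻¹ * (1 - Nm * M) = 1 := by
    have := flat_mul k (1 + Np * M) (1 + Np * M)⁻¹
    rw [Matrix.mul_nonsing_inv _ hdet, flat_one, hA] at this
    exact this.symm
  rw [flat_mul, hB, mul_assoc, ← mul_assoc (1 + Np * M), hcomm, mul_assoc (1 - Nm * M),
    Matrix.mul_nonsing_inv _ hdet, mul_one, hF]
end
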